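/- arXiv:0704.1975 — 3 statements merged into one kernel-verified Lean document; each statement's English description precedes it below -/
import Mathlib

section
/- Let (X, μ) be a finite measure space and, for each t ∈ [0,∞), let f(·;t) : X → [0,∞) be an integrable function; set F(t) = ∫_X f(x;t) dμ(x). Assume that for every x ∈ X the function t ↦ f(x;t) is nondecreasing, and that F(t) → ∞ as t → ∞. Let ε > 0 be arbitrary. Then for μ-almost every x ∈ X there exists T = T(x,ε) > 0 such that for all t > T one has f(x;t) ≤ F(t) · (1 + log(1 + F(t)))^{1+ε}. -/
open MeasureTheory

/-!
Cut the time axis into the layers on which `exp n ≤ F t < exp (n + 1)`. On one layer the family is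
monotone in `t`, so by continuity of `μ` from below Markov's inequality holds for all times of the
layer simultaneously: up to a set of measure at most `e / ψ n`, the value `f t x` stays below
`exp n * ψ n` on the whole layer. If `∑ 1 / ψ n` converges, then by Borel–Cantelli almost every `x`
is exceptional for finitely many layers only. The theorem is the case `ψ u = (1 + u) ^ (1 + ε)`.
-/

open Filter Set
open scoped ENNReal

section MarkovMonotone

variable {X ι : Type*} [MeasurableSpace X] {μ : Measure X} [Preorder ι] [IsDirectedOrder ι]
  [(atTop : Filter ι).IsCountablyGenerated]

theorem mul_meas_exists_ge_le_of_monotone {g : ι → X → ℝ≥0∞} (hg : ∀ i, AEMeasurable (g i) μ)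
    (hmono : Monotone g) {M : ℝ≥0∞} (hM : ∀ i, ∫⁻ x, g i x ∂μ ≤ M) (c : ℝ≥0∞) :
    c * μ {x | ∃ i, c ≤ g i x} ≤ M := by
  have superlevel_mono : Monotone fun i => {x | c ≤ g i x} :=
    fun i j hij x hx => le_trans hx (hmono hij x)
  rw [ofPred_exists, superlevel_mono.measure_iUnion, ENNReal.mul_iSup]
  exact iSup_le fun i => (mul_meas_ge_le_lintegral₀ (hg i) c).trans (hM i)

theorem meas_exists_ge_le_ofReal_div_of_monotone {f : ι → X → ℝ} (hnonneg : ∀ i, 0 ≤ᵐ[μ] f i)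
    (hint : ∀ i, Integrable (f i) μ) (hmono : Monotone f) {M : ℝ}
    (hM : ∀ i, ∫ x, f i x ∂μ ≤ M) {c : ℝ} (hc : 0 < c) :
    μ {x | ∃ i, c ≤ f i x} ≤ ENNReal.ofReal (M / c) := by
  have lintegral_le (i : ι) : ∫⁻ x, ENNReal.ofReal (f i x) ∂μ ≤ ENNReal.ofReal M := by
    rw [← ofReal_integral_eq_lintegral_ofReal (hint i) (hnonneg i)]
    exact ENNReal.ofReal_le_ofReal (hM i)
  have markov := mul_meas_exists_ge_le_of_monotone (fun i => (hint i).aemeasurable.ennreal_ofReal)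
    (fun i j hij x => ENNReal.ofReal_le_ofReal (hmono hij x)) lintegral_le (ENNReal.ofReal c)
  rw [ENNReal.ofReal_div_of_pos hc, ENNReal.le_div_iff_mul_le (by simp [hc]) (by simp), mul_comm]
  refine le_trans ?_ markov
  gcongr with x i
  exact ENNReal.ofReal_le_ofReal

end MarkovMonotone

section GrowthBound

variable {X ι : Type*} [MeasurableSpace X] {μ : Measure X} [LinearOrder ι] [TopologicalSpace ι]
  [OrderTopology ι] [SecondCountableTopology ι] {f : ι → X → ℝ} {F : ι → ℝ}

theorem meas_exists_mem_Ico_ge_le (hnonneg : ∀ t, 0 ≤ᵐ[μ] f t)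
    (hint : ∀ t, Integrable (f t) μ) (hF : ∀ t, F t = ∫ x, f t x ∂μ) (hmono : Monotone f)
    (a b : ℝ) {c : ℝ} (hc : 0 < c) :
    μ {x | ∃ t, F t ∈ Ico a b ∧ c ≤ f t x} ≤ ENNReal.ofReal (b / c) := by
  have F_mono : Monotone F := fun s t hst => by
    simpa only [hF] using integral_mono (hint s) (hint t) (hmono hst)
  -- Convexity of the layer makes its subspace topology the order topology, hence gives `atTop` on
  -- it a countable basis.
  have : (F ⁻¹' Ico a b).OrdConnected := ordConnected_Ico.preimage_mono F_mono
  have layer_bound := meas_exists_ge_le_ofReal_div_of_monotone (μ := μ) (M := b)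
    (f := fun t : F ⁻¹' Ico a b => f t) (fun t => hnonneg t) (fun t => hint t)
    (fun s t hst => hmono hst) (fun t => hF t ▸ t.2.2.le) hc
  simpa only [Subtype.exists, mem_preimage, exists_prop] using layer_bound

theorem ae_eventually_forall_mem_Ico_exp_lt (hnonneg : ∀ t, 0 ≤ᵐ[μ] f t)
    (hint : ∀ t, Integrable (f t) μ) (hF : ∀ t, F t = ∫ x, f t x ∂μ) (hmono : Monotone f)
    {w : ℕ → ℝ} (hw : ∀ n, 0 < w n) (hsum : Summable fun n => (w n)⁻¹) :
    ∀ᵐ x ∂μ, ∀ᶠ n : ℕ in atTop, ∀ t, F t ∈ Ico (Real.exp n) (Real.exp (n + 1)) →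
      f t x < Real.exp n * w n := by
  have layer_bound (n : ℕ) :
      μ {x | ∃ t, F t ∈ Ico (Real.exp n) (Real.exp (n + 1)) ∧ Real.exp n * w n ≤ f t x} ≤
        ENNReal.ofReal (Real.exp 1 * (w n)⁻¹) := by
    have ratio : Real.exp (n + 1) / (Real.exp n * w n) = Real.exp 1 * (w n)⁻¹ := by
      rw [Real.exp_add, mul_div_mul_left _ _ (Real.exp_ne_zero _), div_eq_mul_inv]
    exact ratio ▸ meas_exists_mem_Ico_ge_le hnonneg hint hF hmono _ _
      (mul_pos (Real.exp_pos _) (hw n))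
  have borel_cantelli := ae_eventually_notMem <| ne_top_of_le_ne_top
    (hsum.mul_left (Real.exp 1)).tsum_ofReal_ne_top (ENNReal.tsum_le_tsum layer_bound)
  simpa only [mem_ofPred_eq, not_exists, not_and, not_le] using borel_cantelli

theorem ae_eventually_le_mul_comp_log (hnonneg : ∀ t, 0 ≤ᵐ[μ] f t)
    (hint : ∀ t, Integrable (f t) μ) (hF : ∀ t, F t = ∫ x, f t x ∂μ) (hmono : Monotone f)
    (hF_top : Tendsto F atTop atTop) {ψ : ℝ → ℝ} (hψ_mono : MonotoneOn ψ (Ici 0))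
    (hψ_pos : ∀ n : ℕ, 0 < ψ n) (hψ_sum : Summable fun n : ℕ => (ψ n)⁻¹) :
    ∀ᵐ x ∂μ, ∀ᶠ t in atTop, f t x ≤ F t * ψ (Real.log (F t)) := by
  have layer_top : Tendsto (fun t => ⌊Real.log (F t)⌋₊) atTop atTop :=
    tendsto_nat_floor_atTop.comp (Real.tendsto_log_atTop.comp hF_top)
  filter_upwards [ae_eventually_forall_mem_Ico_exp_lt hnonneg hint hF hmono hψ_pos hψ_sum]
    with x hx
  filter_upwards [layer_top.eventually hx, hF_top.eventually_ge_atTop 1] with t hft one_le_F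
  set n := ⌊Real.log (F t)⌋₊
  have F_pos : 0 < F t := one_pos.trans_le one_le_F
  have log_nonneg : 0 ≤ Real.log (F t) := Real.log_nonneg one_le_F
  have floor_le : (n : ℝ) ≤ Real.log (F t) := Nat.floor_le log_nonneg
  have exp_le : Real.exp n ≤ F t := (Real.le_log_iff_exp_le F_pos).1 floor_le
  have lt_exp : F t < Real.exp (n + 1) :=
    (Real.log_lt_iff_lt_exp F_pos).1 (Nat.lt_floor_add_one _)
  calc f t x ≤ Real.exp n * ψ n := (hft t ⟨exp_le, lt_exp⟩).le
    _ ≤ F t * ψ (Real.log (F t)) :=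
      mul_le_mul exp_le (hψ_mono (mem_Ici.2 n.cast_nonneg) log_nonneg floor_le) (hψ_pos n).le
        F_pos.le

theorem log_bound_cont_general (hnonneg : ∀ t, 0 ≤ᵐ[μ] f t)
    (hint : ∀ t, Integrable (f t) μ) (hF : ∀ t, F t = ∫ x, f t x ∂μ) (hmono : Monotone f)
    (hF_top : Tendsto F atTop atTop) {ε : ℝ} (hε : 0 < ε) :
    ∀ᵐ x ∂μ, ∀ᶠ t in atTop, f t x ≤ F t * (1 + Real.log (1 + F t)) ^ (1 + ε) := by
  have weight_mono : MonotoneOn (fun u : ℝ => (1 + u) ^ (1 + ε)) (Ici 0) := fun u hu v _ huv =>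
    Real.rpow_le_rpow (add_nonneg zero_le_one hu) (by gcongr) (by positivity)
  have weight_summable : Summable fun n : ℕ => ((1 + n : ℝ) ^ (1 + ε))⁻¹ := by
    simpa [add_comm] using (summable_nat_add_iff 1).2
      (Real.summable_nat_rpow_inv.2 (lt_add_of_pos_right 1 hε))
  filter_upwards [ae_eventually_le_mul_comp_log hnonneg hint hF hmono hF_top weight_mono
    (fun n => by positivity) weight_summable] with x hx
  filter_upwards [hx, hF_top.eventually_ge_atTop 1] with t hft one_le_F
  have log_nonneg : 0 ≤ Real.log (F t) := Real.log_nonneg one_le_F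
  refine hft.trans ?_
  gcongr
  linarith

end GrowthBound

/-- For a family of nonnegative integrable functions `f (·; t)` on a finite measure space,
nondecreasing in `t` for each fixed `x`, whose averages `F t = ∫ f(x;t) dμ(x)` tend to
infinity, for every `ε > 0` and almost every `x` there is `T > 0` with
`f(x;t) ≤ F(t) (1 + log(1 + F(t)))^(1+ε)` for all `t > T`. -/
theorem log_bound_cont {X : Type*} [MeasurableSpace X] (μ : Measure X) [IsFiniteMeasure μ]
    (f : ℝ → X → ℝ) (F : ℝ → ℝ)
    (hf_nonneg : ∀ t : ℝ, 0 ≤ t → ∀ x : X, 0 ≤ f t x)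
    (hf_int : ∀ t : ℝ, 0 ≤ t → Integrable (f t) μ)
    (hF : ∀ t : ℝ, 0 ≤ t → F t = ∫ x, f t x ∂μ)
    (hf_mono : ∀ x : X, ∀ s t : ℝ, 0 ≤ s → s ≤ t → f s x ≤ f t x)
    (hF_top : Filter.Tendsto F Filter.atTop Filter.atTop)
    (ε : ℝ) (hε : 0 < ε) :
    ∀ᵐ x ∂μ, ∃ T : ℝ, 0 < T ∧ ∀ t : ℝ, T < t →
      f t x ≤ F t * (1 + Real.log (1 + F t)) ^ (1 + ε) := by
  filter_upwards [log_bound_cont_general (f := fun t : Ici (0 : ℝ) => f t) (F := fun t => F t)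
    (fun t => .of_forall (hf_nonneg t t.2)) (fun t => hf_int t t.2) (fun t => hF t t.2)
    (fun s t hst x => hf_mono x s t s.2 hst) (tendsto_comp_val_Ici_atTop.2 hF_top) hε] with x hx
  refine (atTop_basis_Ioi' 0).eventually_iff.1 ?_
  rwa [← map_val_Ici_atTop 0, eventually_map]
end

section
/- Let (X, μ) be a finite measure space and, for each t ∈ [0,∞), let f(·;t) : X → [0,∞) be an integrable function; set F(t) = ∫_X f(x;t) dμ(x). Assume that for every x ∈ X the function t ↦ f(x;t) is nondecreasing, and that F(t) → ∞ as t → ∞. Let p > 0 and suppose F(t) = O(t^p) as t → ∞. Then for every ε > 0 and μ-almost every x ∈ X one has f(x;t) = O(t^{p+ε}) as t → ∞. -/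
open MeasureTheory Filter Asymptotics

/-!
Fix `q > p`. For nonnegative `f`, the integrals of `f(·; 2 ^ n) / 2 ^ (n q)` decay geometrically, so
for almost every `x` the values `f(x; 2 ^ n) / 2 ^ (n q)` are summable in `n`, and in particular
bounded. Every time `t ≥ 1` satisfies `t ≤ 2 ^ n ≤ 2 t` for some `n`, and monotonicity in time
carries the bound from `2 ^ n` to `t`. For signed `f`, apply this to `f(·; t) - f(·; 0)`.
-/

lemma isBigO_const_rpow_atTop (c : ℝ) {p : ℝ} (hp : 0 ≤ p) :
    (fun _ : ℝ ↦ c) =O[atTop] fun t : ℝ ↦ t ^ p := by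
  refine (isBigO_const_const c (one_ne_zero' ℝ) atTop).trans (.of_bound' ?_)
  filter_upwards [eventually_ge_atTop 1] with t ht
  simpa using (Real.one_le_rpow ht hp).trans (le_abs_self _)

section GeometricSubsequence

variable {b : ℝ}

lemma le_pow_ceil_logb (hb : 1 < b) {t : ℝ} (ht : 0 < t) : t ≤ b ^ ⌈Real.logb b t⌉₊ := by
  rw [← Real.rpow_natCast, ← Real.logb_le_iff_le_rpow hb ht]
  exact Nat.le_ceil _

lemma isTheta_pow_ceil_logb (hb : 1 < b) :
    (fun t : ℝ ↦ b ^ ⌈Real.logb b t⌉₊) =Θ[atTop] fun t ↦ t := by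
  have hb₀ : 0 < b := by positivity
  refine ⟨.of_bound b ?_, .of_bound 1 ?_⟩ <;> filter_upwards [eventually_ge_atTop 1] with t ht <;>
    rw [Real.norm_of_nonneg (by positivity), Real.norm_of_nonneg (by positivity)]
  · calc b ^ ⌈Real.logb b t⌉₊ = b ^ (⌈Real.logb b t⌉₊ : ℝ) := (Real.rpow_natCast _ _).symm
      _ ≤ b ^ (Real.logb b t + 1) :=
        Real.rpow_le_rpow_of_exponent_le hb.le (Nat.ceil_lt_add_one (Real.logb_nonneg hb ht)).le
      _ = b * t := by
        rw [Real.rpow_add_one hb₀.ne', Real.rpow_logb hb₀ hb.ne' (by positivity), mul_comm]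
  · simpa only [one_mul] using le_pow_ceil_logb hb (by positivity)

lemma isBigO_rpow_of_monotoneOn_of_isBigO_pow (hb : 1 < b) {u : ℝ → ℝ} {a q : ℝ}
    (hu_mono : MonotoneOn u (Set.Ici a)) (hu_nonneg : ∀ᶠ t in atTop, 0 ≤ u t)
    (hu : (fun n : ℕ ↦ u (b ^ n)) =O[atTop] fun n ↦ (b ^ n) ^ q) :
    u =O[atTop] fun t ↦ t ^ q := by
  let N : ℝ → ℕ := fun t ↦ ⌈Real.logb b t⌉₊
  have hN : Tendsto N atTop atTop := tendsto_nat_ceil_atTop.comp (Real.tendsto_logb_atTop hb)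
  have hu_le : ∀ᶠ t in atTop, ‖u t‖ ≤ u (b ^ N t) := by
    filter_upwards [hu_nonneg, eventually_ge_atTop a, eventually_gt_atTop 0] with t hut hat ht
    have ht_le : t ≤ b ^ N t := le_pow_ceil_logb hb ht
    exact (Real.norm_of_nonneg hut).trans_le (hu_mono hat (hat.trans ht_le) ht_le)
  calc u =O[atTop] fun t ↦ u (b ^ N t) := .of_norm_eventuallyLE hu_le
    _ =O[atTop] fun t ↦ (b ^ N t) ^ q := hu.comp_tendsto hN
    _ =Θ[atTop] fun t ↦ t ^ q := (isTheta_pow_ceil_logb hb).rpow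
      (.of_forall fun t ↦ by positivity) (eventually_ge_atTop 0)

lemma summable_pow_div_rpow_of_isBigO_rpow (hb : 1 < b) {G : ℝ → ℝ} {p q : ℝ} (hpq : p < q)
    (hG : G =O[atTop] fun t ↦ t ^ p) : Summable fun n : ℕ ↦ G (b ^ n) / (b ^ n) ^ q := by
  have hb₀ : 0 < b := by positivity
  have h_ratio : b ^ (p - q) < 1 := Real.rpow_lt_one_of_one_lt_of_neg hb (sub_neg.2 hpq)
  have h_pow (n : ℕ) : (b ^ n) ^ p / (b ^ n) ^ q = (b ^ (p - q)) ^ n := by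
    rw [← Real.rpow_sub (by positivity), Real.rpow_pow_comm hb₀.le]
  refine summable_of_isBigO_nat
    (summable_geometric_of_lt_one (Real.rpow_nonneg hb₀.le _) h_ratio) ?_
  simpa only [Function.comp_apply, ← div_eq_mul_inv, h_pow] using
    (hG.comp_tendsto (tendsto_pow_atTop_atTop_of_one_lt hb)).mul
      (isBigO_refl (fun n : ℕ ↦ ((b ^ n) ^ q)⁻¹) atTop)

end GeometricSubsequence

section AlmostEverywhere

variable {X : Type*} [MeasurableSpace X] {μ : Measure X}

lemma ae_summable_norm_of_summable_integral_norm {E ι : Type*} [NormedAddCommGroup E] [Countable ι]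
    {g : ι → X → E} (hg_int : ∀ i, Integrable (g i) μ)
    (hg_sum : Summable fun i ↦ ∫ x, ‖g i x‖ ∂μ) : ∀ᵐ x ∂μ, Summable fun i ↦ ‖g i x‖ := by
  refine summable_norm_of_tsum_eLpNorm_ne_top le_rfl (fun i ↦ (hg_int i).aestronglyMeasurable) ?_
  simp_rw [eLpNorm_one_eq_lintegral_enorm, ← ofReal_integral_norm_eq_lintegral_enorm (hg_int _)]
  exact hg_sum.tsum_ofReal_ne_top

lemma ae_isBigO_of_summable_integral_norm_div {E : Type*} [NormedAddCommGroup E]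
    {g : ℕ → X → E} {c : ℕ → ℝ} (hc : ∀ n, 0 < c n) (hg_int : ∀ n, Integrable (g n) μ)
    (hg_sum : Summable fun n ↦ (∫ x, ‖g n x‖ ∂μ) / c n) :
    ∀ᵐ x ∂μ, (fun n ↦ g n x) =O[atTop] c := by
  have h_sum : Summable fun n ↦ ∫ x, ‖‖g n x‖ / c n‖ ∂μ := by
    simpa only [norm_div, norm_norm, integral_div, Real.norm_of_nonneg (hc _).le] using hg_sum
  filter_upwards [ae_summable_norm_of_summable_integral_norm
    (fun n ↦ (hg_int n).norm.div_const (c n)) h_sum] with x hx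
  have h_bdd : (fun n ↦ ‖g n x‖ / c n) =O[atTop] fun _ ↦ (1 : ℝ) :=
    hx.of_norm.tendsto_atTop_zero.isBigO_one ℝ
  simpa only [div_mul_cancel₀ _ (hc _).ne', one_mul, isBigO_norm_left] using
    h_bdd.mul (isBigO_refl c atTop)

variable {f : ℝ → X → ℝ} {p q : ℝ}

theorem ae_isBigO_rpow_of_integral_isBigO_rpow_of_nonneg (hf_nonneg : 0 ≤ᵐ[μ] f 0)
    (hf_int : ∀ t, 0 ≤ t → Integrable (f t) μ)
    (hf_mono : ∀ᵐ x ∂μ, MonotoneOn (f · x) (Set.Ici 0)) (hpq : p < q)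
    (hF : (fun t ↦ ∫ x, f t x ∂μ) =O[atTop] fun t ↦ t ^ p) :
    ∀ᵐ x ∂μ, (f · x) =O[atTop] fun t ↦ t ^ q := by
  have h_nonneg : ∀ᵐ x ∂μ, ∀ t, 0 ≤ t → 0 ≤ f t x := by
    filter_upwards [hf_nonneg, hf_mono] with x hx hx_mono t ht
    exact hx.trans (hx_mono Set.self_mem_Ici ht ht)
  have h_norm (n : ℕ) : ∫ x, ‖f (2 ^ n) x‖ ∂μ = ∫ x, f (2 ^ n) x ∂μ :=
    integral_congr_ae <| h_nonneg.mono fun x hx ↦ Real.norm_of_nonneg (hx _ (by positivity))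
  have h_sum : Summable fun n : ℕ ↦ (∫ x, ‖f (2 ^ n) x‖ ∂μ) / ((2 : ℝ) ^ n) ^ q := by
    simpa only [h_norm] using summable_pow_div_rpow_of_isBigO_rpow one_lt_two hpq hF
  filter_upwards [h_nonneg, hf_mono, ae_isBigO_of_summable_integral_norm_div
    (fun n ↦ by positivity) (fun n ↦ hf_int _ (by positivity)) h_sum] with x hx hx_mono hx_pow
  exact isBigO_rpow_of_monotoneOn_of_isBigO_pow one_lt_two hx_mono
    ((eventually_ge_atTop 0).mono hx) hx_pow

theorem power_bound_cont_general (hf_int : ∀ t, 0 ≤ t → Integrable (f t) μ)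
    (hf_mono : ∀ᵐ x ∂μ, MonotoneOn (f · x) (Set.Ici 0)) (hp : 0 ≤ p) (hpq : p < q)
    (hF : (fun t ↦ ∫ x, f t x ∂μ) =O[atTop] fun t ↦ t ^ p) :
    ∀ᵐ x ∂μ, (f · x) =O[atTop] fun t ↦ t ^ q := by
  have h_integral_sub : (fun t ↦ ∫ x, (f t x - f 0 x) ∂μ) =O[atTop] fun t ↦ t ^ p := by
    refine (hF.sub (isBigO_const_rpow_atTop (∫ x, f 0 x ∂μ) hp)).congr' ?_ .rfl
    filter_upwards [eventually_ge_atTop 0] with t ht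
    exact (integral_sub (hf_int t ht) (hf_int 0 le_rfl)).symm
  have h_sub : ∀ᵐ x ∂μ, (fun t ↦ f t x - f 0 x) =O[atTop] fun t ↦ t ^ q :=
    ae_isBigO_rpow_of_integral_isBigO_rpow_of_nonneg (f := fun t x ↦ f t x - f 0 x)
      (.of_forall fun x ↦ (sub_self (f 0 x)).ge) (fun t ht ↦ (hf_int t ht).sub (hf_int 0 le_rfl))
      (hf_mono.mono fun x hx s hs t ht hst ↦ sub_le_sub_right (hx hs ht hst) _) hpq h_integral_sub
  filter_upwards [h_sub] with x hx
  simpa using hx.add (isBigO_const_rpow_atTop (f 0 x) (hp.trans hpq.le))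

end AlmostEverywhere

/-- If the averages satisfy `F(t) = O(t^p)` with `p > 0`, the functions are nondecreasing in
time and `F(t) → ∞`, then for every `ε > 0` and almost every `x` one has
`f(x;t) = O(t^(p+ε))` as `t → ∞`. -/
theorem power_bound_cont {X : Type*} [MeasurableSpace X] (μ : Measure X) [IsFiniteMeasure μ]
    (f : ℝ → X → ℝ) (F : ℝ → ℝ)
    (hf_nonneg : ∀ t : ℝ, 0 ≤ t → ∀ x : X, 0 ≤ f t x)
    (hf_int : ∀ t : ℝ, 0 ≤ t → Integrable (f t) μ)
    (hF : ∀ t : ℝ, 0 ≤ t → F t = ∫ x, f t x ∂μ)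
    (hf_mono : ∀ x : X, ∀ s t : ℝ, 0 ≤ s → s ≤ t → f s x ≤ f t x)
    (hF_top : Tendsto F atTop atTop)
    (p : ℝ) (hp : 0 < p) (hF_O : F =O[atTop] fun t : ℝ => t ^ p) :
    ∀ ε : ℝ, 0 < ε →
      ∀ᵐ x ∂μ, (fun t : ℝ => f t x) =O[atTop] fun t : ℝ => t ^ (p + ε) := fun _ hε ↦
  power_bound_cont_general hf_int (.of_forall fun x s hs t _ hst ↦ hf_mono x s t hs hst) hp.le
    (lt_add_of_pos_right p hε) (hF_O.congr' ((eventually_ge_atTop 0).mono hF) .rfl)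
end

section
/- Let (X, μ) be a finite measure space and, for each n ∈ ℕ, let f(·;n) : X → [0,∞) be an integrable function such that for every x ∈ X the numerical sequence n ↦ f(x;n) is nondecreasing; set F(n) = ∫_X f(x;n) dμ(x). Let a > 0 and suppose F(n) = O(e^{an}) as n → ∞. Then for every ε > 0 and μ-almost every x ∈ X one has f(x;n) = O(e^{(a+ε)n}) as n → ∞. -/
open MeasureTheory Filter Asymptotics

/-!
By monotone convergence, if the integrals of `‖f n ·‖ / |g n|` form a convergent series, then
`∑ n, ‖f n x‖ / |g n|` converges for almost every `x`, and in particular its terms tend to `0`.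
When the integrals of `‖f n ·‖` are `O(e^{an})` and `g n = e^{bn}` with `a < b`, the series of
integrals is dominated by the geometric series `∑ n, e^{(a-b)n}`.
-/

section SummableIntegrals

variable {X E ι : Type*} [MeasurableSpace X] [NormedAddCommGroup E] [Countable ι]
  {μ : Measure X} {f : ι → X → E}

theorem ae_summable_norm_of_summable_integral_norm_s6 (hf_int : ∀ i, Integrable (f i) μ)
    (hf_sum : Summable fun i => ∫ x, ‖f i x‖ ∂μ) :
    ∀ᵐ x ∂μ, Summable fun i => ‖f i x‖ := by
  refine summable_norm_of_tsum_eLpNorm_ne_top le_rfl (fun i => (hf_int i).1) ?_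
  have eLpNorm_eq (i : ι) : eLpNorm (f i) 1 μ = ENNReal.ofReal (∫ x, ‖f i x‖ ∂μ) := by
    rw [eLpNorm_one_eq_lintegral_enorm, ofReal_integral_norm_eq_lintegral_enorm (hf_int i)]
  simpa only [eLpNorm_eq] using hf_sum.tsum_ofReal_ne_top

theorem ae_isLittleO_cofinite_of_summable_integral_norm_div {g : ι → ℝ} (hg : ∀ i, g i ≠ 0)
    (hf_int : ∀ i, Integrable (f i) μ)
    (hfg_sum : Summable fun i => (∫ x, ‖f i x‖ ∂μ) / ‖g i‖) :
    ∀ᵐ x ∂μ, (fun i => f i x) =o[cofinite] g := by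
  have ae_summable : ∀ᵐ x ∂μ, Summable fun i => ‖‖f i x‖ / g i‖ :=
    ae_summable_norm_of_summable_integral_norm_s6 (fun i => (hf_int i).norm.div_const (g i)) <| by
      simpa only [norm_div, norm_norm, integral_div] using hfg_sum
  filter_upwards [ae_summable] with x hx
  exact ((isLittleO_iff_tendsto fun i hi => absurd hi (hg i)).2
    hx.of_norm.tendsto_cofinite_zero).of_norm_left

end SummableIntegrals

theorem summable_div_exp_of_isBigO_exp {u : ℕ → ℝ} {a b : ℝ} (hab : a < b)
    (hu : u =O[atTop] fun n : ℕ => Real.exp (a * n)) :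
    Summable fun n : ℕ => u n / Real.exp (b * n) := by
  have geometric : Summable fun n : ℕ => Real.exp (n * (a - b)) :=
    Real.summable_exp_nat_mul_iff.2 (sub_neg.2 hab)
  refine summable_of_isBigO_nat geometric ?_
  refine (hu.mul (isBigO_refl (fun n : ℕ => (Real.exp (b * n))⁻¹) atTop)).congr
    (fun n => (div_eq_mul_inv _ _).symm) fun n => ?_
  rw [← Real.exp_neg, ← Real.exp_add]
  ring_nf

theorem exp_bound_disc_general {X E : Type*} [MeasurableSpace X] [NormedAddCommGroup E]
    {μ : Measure X} {f : ℕ → X → E} (hf_int : ∀ n, Integrable (f n) μ) {a b : ℝ} (hab : a < b)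
    (hf_O : (fun n => ∫ x, ‖f n x‖ ∂μ) =O[atTop] fun n : ℕ => Real.exp (a * n)) :
    ∀ᵐ x ∂μ, (fun n => f n x) =o[atTop] fun n : ℕ => Real.exp (b * n) := by
  rw [← Nat.cofinite_eq_atTop]
  refine ae_isLittleO_cofinite_of_summable_integral_norm_div (fun n => Real.exp_ne_zero _) hf_int ?_
  simpa only [Real.norm_eq_abs, Real.abs_exp] using summable_div_exp_of_isBigO_exp hab hf_O

/-- Discrete-time version: if the averages satisfy `F(n) = O(e^(a n))` with `a > 0` and the
sequences `n ↦ f(x;n)` are nondecreasing, then for every `ε > 0` and almost every `x` one has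
`f(x;n) = O(e^((a+ε) n))` as `n → ∞`. -/
theorem exp_bound_disc {X : Type*} [MeasurableSpace X] (μ : Measure X) [IsFiniteMeasure μ]
    (f : ℕ → X → ℝ) (F : ℕ → ℝ)
    (hf_nonneg : ∀ n : ℕ, ∀ x : X, 0 ≤ f n x)
    (hf_int : ∀ n : ℕ, Integrable (f n) μ)
    (hF : ∀ n : ℕ, F n = ∫ x, f n x ∂μ)
    (hf_mono : ∀ x : X, Monotone fun n : ℕ => f n x)
    (a : ℝ) (ha : 0 < a) (hF_O : F =O[atTop] fun n : ℕ => Real.exp (a * n)) :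
    ∀ ε : ℝ, 0 < ε →
      ∀ᵐ x ∂μ, (fun n : ℕ => f n x) =O[atTop] fun n : ℕ => Real.exp ((a + ε) * n) := by
  intro ε hε
  refine (exp_bound_disc_general hf_int (lt_add_of_pos_right a hε) ?_).mono fun x hx => hx.isBigO
  simpa only [Real.norm_of_nonneg (hf_nonneg _ _), ← hF] using hF_O
end
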